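/- arXiv:2411.03508 — 5 statements merged into one kernel-verified Lean document; each statement's English description precedes it below -/
import Mathlib

section
/- Assume additionally that K has characteristic 0, n ≥ 5, and d = n − 1. Then the set of K-points (a,c) of the affine curve y^{n−1} = f(x) that are torsion points of order exactly n (i.e., n is the least positive integer with m_{(a,c)}^n principal) has cardinality either 0 or n − 1. -/
open Polynomial

/-- The affine coordinate ring `A = K[X,Y]/(Y^d − f(X))` of the curve `y^d = f(x)`,
realized as `AdjoinRoot` of the polynomial `Y^d - f(X)` over `K[X]`. -/
noncomputable abbrev CurveRing (K : Type*) [Field K] (d : ℕ) (f : K[X]) : Type _ :=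
  AdjoinRoot ((X : K[X][X]) ^ d - C f)

/-- The maximal ideal `m_{(a,c)} = (X - a, Y - c)` of the coordinate ring. -/
noncomputable def ptIdeal {K : Type*} [Field K] (d : ℕ) (f : K[X]) (a c : K) :
    Ideal (CurveRing K d f) :=
  Ideal.span {AdjoinRoot.of _ (X - C a), AdjoinRoot.root _ - AdjoinRoot.of _ (C c)}

/-- `P = (a,c)` is a torsion point of order `m` on the Jacobian: `m` is the least
positive integer such that `m_P ^ m` is a principal ideal of `A`. -/
def IsTorsionOfOrder {K : Type*} [Field K] (d : ℕ) (f : K[X]) (a c : K) (m : ℕ) : Prop :=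
  IsLeast {k : ℕ | 0 < k ∧ (ptIdeal d f a c ^ k).IsPrincipal} m

namespace CurveAux

section ring
variable {K : Type*} [Field K] {d n : ℕ} {f : K[X]}

theorem root_pow : (AdjoinRoot.root ((X : K[X][X]) ^ d - C f)) ^ d = AdjoinRoot.of _ f := by
  have := AdjoinRoot.eval₂_root ((X : K[X][X]) ^ d - C f)
  simpa [sub_eq_zero] using this

theorem exists_rep (hd : 0 < d) (g : CurveRing K d f) : ∃ p : ℕ → K[X],
    g = ∑ i ∈ Finset.range d, AdjoinRoot.of _ (p i) * (AdjoinRoot.root _) ^ i := by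
  have hm : ((X : K[X][X]) ^ d - C f).Monic := monic_X_pow_sub_C f hd.ne'
  have hdeg : ((X : K[X][X]) ^ d - C f).natDegree = d := natDegree_X_pow_sub_C
  obtain ⟨q, rfl⟩ := AdjoinRoot.mk_surjective g
  refine ⟨fun i => (q %ₘ ((X : K[X][X]) ^ d - C f)).coeff i, ?_⟩
  have h1 : AdjoinRoot.mk ((X : K[X][X]) ^ d - C f) q =
      AdjoinRoot.mk _ (q %ₘ ((X : K[X][X]) ^ d - C f)) := by
    rw [AdjoinRoot.mk_eq_mk, modByMonic_eq_sub_mul_div]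
    simp
  have h2 : (q %ₘ ((X : K[X][X]) ^ d - C f)).natDegree < d := by
    have := natDegree_modByMonic_lt q hm (by intro h; rw [h] at hdeg; simp at hdeg; omega)
    omega
  rw [h1]
  conv_lhs => rw [as_sum_range' _ d h2]
  rw [map_sum]
  refine Finset.sum_congr rfl fun i _ => ?_
  rw [← C_mul_X_pow_eq_monomial]
  simp

theorem of_inj (hd : 0 < d) :
    Function.Injective (AdjoinRoot.of ((X : K[X][X]) ^ d - C f)) := by
  apply AdjoinRoot.of.injective_of_degree_ne_zero
  rw [degree_X_pow_sub_C hd]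
  exact_mod_cast hd.ne'

/-- valuations with a pole at infinity -/
structure Good {Γ : Type*} [LinearOrderedCommGroupWithZero Γ]
    (w : Valuation (CurveRing K d f) Γ) : Prop where
  poly : ∀ p : K[X], p ≠ 0 → w (AdjoinRoot.of _ p) = w (AdjoinRoot.of _ X) ^ p.natDegree
  one_lt : 1 < w (AdjoinRoot.of _ X)

theorem exists_good {K : Type u} [Field K] [IsAlgClosed K] {d : ℕ} {f : K[X]} (hd : 0 < d)
    [IsDomain (CurveRing K d f)] :
    ∃ (Γ : Type u) (_ : LinearOrderedCommGroupWithZero Γ) (w : Valuation (CurveRing K d f) Γ),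
      Good w := by
  let A := CurveRing K d f
  let L := FractionRing A
  let φ : K[X] →+* L := (algebraMap A L).comp (AdjoinRoot.of _)
  have hφ : Function.Injective φ := (IsFractionRing.injective A L).comp (of_inj hd)
  let i : K →+* L := φ.comp C
  have hR : φ X ∉ i.range := by
    rintro ⟨c, hc⟩
    exact X_ne_C c (hφ hc).symm
  have hcl : IsIntegrallyClosedIn i.range L := by
    rw [Subring.isIntegrallyClosedIn_iff]
    intro x hx
    obtain ⟨p, hp, hpx⟩ := hx
    obtain ⟨q, hq⟩ : ∃ q : K[X], q.map i.rangeRestrict = p :=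
      Polynomial.map_surjective _ i.rangeRestrict_surjective p
    subst hq
    have hq0 : q ≠ 0 := by
      rintro rfl
      simp at hp
    rw [eval₂_map] at hpx
    have hpx : q.eval₂ i x = 0 := hpx
    have hs := IsAlgClosed.splits q
    rw [hs.eq_prod_roots, eval₂_mul, eval₂_C, mul_eq_zero] at hpx
    rcases hpx with h | h
    · rw [map_eq_zero] at h
      exact absurd (leadingCoeff_eq_zero.mp h) hq0
    · rw [← coe_eval₂RingHom, map_multiset_prod, Multiset.prod_eq_zero_iff] at h
      simp only [Multiset.map_map, Multiset.mem_map, Function.comp] at h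
      obtain ⟨r, _, hr⟩ := h
      simp [sub_eq_zero] at hr
      exact ⟨r, hr.symm⟩
  obtain ⟨V, hV, hXV⟩ := Subring.exists_le_valuationSubring_of_isIntegrallyClosedIn hR
  let _ : Algebra K L := i.toAlgebra
  have hc1 : ∀ c : K, V.valuation (i c) ≤ 1 := fun c =>
    (V.valuation_le_one_iff _).2 (hV ⟨c, rfl⟩)
  have _ : V.valuation.IsTrivialOn K := ⟨by
    intro c hc
    change V.valuation (i c) = 1
    refine le_antisymm (hc1 c) ?_
    have h1 : V.valuation (i c) * V.valuation (i c⁻¹) = 1 := by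
      rw [← map_mul, ← map_mul, mul_inv_cancel₀ hc]; simp
    calc 1 = V.valuation (i c) * V.valuation (i c⁻¹) := h1.symm
      _ ≤ V.valuation (i c) * 1 := by gcongr; exact hc1 _
      _ = _ := mul_one _⟩
  have hlt : 1 < V.valuation (φ X) := by
    rw [← not_le, V.valuation_le_one_iff]; exact hXV
  refine ⟨V.ValueGroup, inferInstance, V.valuation.comap (algebraMap A L), ?_, hlt⟩
  intro p hp
  have := Polynomial.valuation_aeval_eq_valuation_X_pow_natDegree_of_one_lt_valuation_X
    (v := V.valuation) (φ X) hlt hp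
  have h2 : aeval (φ X) p = φ p := by
    rw [aeval_def]
    change eval₂ (φ.comp C) (φ X) p = φ p
    rw [← hom_eval₂]; simp
  rw [h2] at this
  exact this

end ring
end CurveAux

namespace CurveAux

section ring
variable {K : Type*} [Field K] {d n : ℕ} {f : K[X]}

/-- pole order at infinity of `∑ p i y ^ i` -/
noncomputable def wt (d n : ℕ) (p : ℕ → K[X]) : ℕ :=
  open Classical in (Finset.range d).sup
    (fun i => if p i = 0 then 0 else d * (p i).natDegree + n * i)

theorem le_wt (p : ℕ → K[X]) {i : ℕ} (hi : i < d) (h : p i ≠ 0) :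
    d * (p i).natDegree + n * i ≤ wt d n p := by
  classical
  have := Finset.le_sup (f := fun i => if p i = 0 then 0 else d * (p i).natDegree + n * i)
    (Finset.mem_range.2 hi)
  simp only [h, if_false] at this
  exact this

theorem Good.term {Γ : Type*} [LinearOrderedCommGroupWithZero Γ]
    {w : Valuation (CurveRing K d f) Γ} (hw : Good w) (hf : f ≠ 0)
    (hn : f.natDegree = n) (p : K[X]) (hp : p ≠ 0) (i : ℕ) :
    w (AdjoinRoot.of _ p * AdjoinRoot.root _ ^ i) ^ d =
      w (AdjoinRoot.of _ X) ^ (d * p.natDegree + n * i) := by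
  have hy : w (AdjoinRoot.root _) ^ d = w (AdjoinRoot.of _ X) ^ n := by
    rw [← map_pow, root_pow, hw.poly f hf, hn]
  rw [map_mul, map_pow, hw.poly p hp, mul_pow, ← pow_mul, ← pow_mul, mul_comm i d,
    pow_mul _ d i, hy, ← pow_mul, ← pow_add, mul_comm d]

theorem Good.sum {Γ : Type*} [LinearOrderedCommGroupWithZero Γ]
    {w : Valuation (CurveRing K d f) Γ} (hw : Good w) (hf : f ≠ 0)
    (hn : f.natDegree = n) (hd : 0 < d) (hc : d.Coprime n) (p : ℕ → K[X])
    (hp : ∃ i < d, p i ≠ 0) :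
    w (∑ i ∈ Finset.range d, AdjoinRoot.of _ (p i) * (AdjoinRoot.root _) ^ i) ^ d =
      w (AdjoinRoot.of _ X) ^ wt d n p := by
  classical
  let s := (Finset.range d).filter (fun i => p i ≠ 0)
  have hs : s.Nonempty := by
    obtain ⟨i, hi, h⟩ := hp
    exact ⟨i, by simp [s, hi, h]⟩
  obtain ⟨j, hj, hmax⟩ := Finset.exists_max_image s
    (fun i => d * (p i).natDegree + n * i) hs
  obtain ⟨hjd, hpj⟩ : j < d ∧ p j ≠ 0 := by simpa [s] using hj
  have hX0 : 0 < w (AdjoinRoot.of ((X : K[X][X]) ^ d - C f) X) := zero_lt_one.trans hw.one_lt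
  have h1 := hw.term hf hn (p j) hpj j
  have hwt : wt d n p = d * (p j).natDegree + n * j := by
    refine le_antisymm ?_ (le_wt p hjd hpj)
    refine Finset.sup_le fun i hi => ?_
    split_ifs with h
    · omega
    · exact hmax i (by simp [s, h]; simpa using hi)
  rw [hwt, ← h1]
  congr 1
  apply Valuation.map_sum_eq_of_lt _ (Finset.mem_range.2 hjd)
  intro i hi
  simp only [Finset.mem_sdiff, Finset.mem_range, Finset.mem_singleton] at hi
  obtain ⟨hid, hij⟩ := hi
  apply lt_of_pow_lt_pow_left₀ d zero_le
  rw [h1]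
  by_cases h : p i = 0
  · rw [h]
    simp only [map_zero, zero_mul]
    rw [zero_pow hd.ne']
    exact pow_pos hX0 _
  · rw [hw.term hf hn (p i) h i]
    apply pow_lt_pow_right₀ hw.one_lt
    refine lt_of_le_of_ne (hmax i (by simp [s, h, hid])) ?_
    intro he
    apply hij
    have hm : n * i ≡ n * j [MOD d] := by
      have : d * (p i).natDegree + n * i ≡ d * (p j).natDegree + n * j [MOD d] := by rw [he]
      simpa [Nat.ModEq, Nat.add_mod] using this
    have := Nat.ModEq.cancel_left_of_coprime (by simpa using hc) hm
    exact Nat.ModEq.eq_of_lt_of_lt this hid hjd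

theorem exists_ne {p : ℕ → K[X]} (hp : ∑ i ∈ Finset.range d,
    AdjoinRoot.of ((X : K[X][X]) ^ d - C f) (p i) * (AdjoinRoot.root _) ^ i ≠ 0) :
    ∃ i < d, p i ≠ 0 := by
  by_contra! h
  apply hp
  refine Finset.sum_eq_zero fun i hi => ?_
  rw [h i (Finset.mem_range.1 hi)]; simp

/-- units are constants -/
theorem unit_const [IsAlgClosed K] [IsDomain (CurveRing K d f)] (hf : f ≠ 0)
    (hn : f.natDegree = n) (hn0 : 0 < n) (hd : 0 < d) (hc : d.Coprime n)
    (u : CurveRing K d f) (hu : IsUnit u) : ∃ c : K, c ≠ 0 ∧ u = AdjoinRoot.of _ (C c) := by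
  obtain ⟨Γ, _, w, hw⟩ := exists_good (K := K) (f := f) hd
  obtain ⟨u', hu'⟩ := isUnit_iff_exists_inv.1 hu
  obtain ⟨p, hp⟩ := exists_rep hd u
  obtain ⟨q, hq⟩ := exists_rep hd u'
  have hu0 : u ≠ 0 := hu.ne_zero
  have hu0' : u' ≠ 0 := by rintro rfl; simp at hu'
  have h1 := hw.sum hf hn hd hc p (exists_ne (hp ▸ hu0))
  have h2 := hw.sum hf hn hd hc q (exists_ne (hq ▸ hu0'))
  rw [← hp] at h1
  rw [← hq] at h2
  have h3 : w (AdjoinRoot.of _ X) ^ (wt d n p + wt d n q) = w (AdjoinRoot.of _ X) ^ 0 := by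
    rw [pow_add, ← h1, ← h2, ← mul_pow, ← map_mul, hu']; simp
  have h4 := (pow_right_inj₀ (zero_lt_one.trans hw.one_lt) hw.one_lt.ne').1 h3
  have h5 : ∀ i < d, p i ≠ 0 → i = 0 ∧ (p i).natDegree = 0 := by
    intro i hi h
    have := le_wt (n := n) p hi h
    have h6 : d * (p i).natDegree + n * i = 0 := by omega
    simp at h6
    omega
  have h7 : u = AdjoinRoot.of _ (p 0) := by
    rw [hp, Finset.sum_eq_single 0]
    · simp
    · intro i hi hi0
      by_cases h : p i = 0
      · simp [h]
      · exact absurd (h5 i (Finset.mem_range.1 hi) h).1 hi0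
    · simp [hd]
  have h8 : p 0 ≠ 0 := by
    intro h; rw [h] at h7; simp at h7; exact hu0 h7
  have h9 := eq_C_of_natDegree_eq_zero (h5 0 hd h8).2
  refine ⟨(p 0).coeff 0, ?_, ?_⟩
  · intro h; rw [h] at h9; simp at h9; exact h8 h9
  · rw [h7]; congr 1

end ring
end CurveAux

namespace CurveAux

section ring
variable {K : Type*} [Field K] {d n : ℕ} {f : K[X]}

theorem prod_roots {B : Type*} [CommRing B] [IsDomain B] (i : K →+* B) {ζ : K}
    (hζ : IsPrimitiveRoot ζ d) (hd : 0 < d) (x y : B) :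
    ∏ η ∈ nthRootsFinset d (1 : K), (x - i η * y) = x ^ d - y ^ d := by
  classical
  have hζ' : IsPrimitiveRoot (i ζ) d := hζ.map_of_injective i.injective
  rw [hζ'.pow_sub_pow_eq_prod_sub_mul _ _ hd]
  have : nthRootsFinset d (1 : B) = (nthRootsFinset d (1 : K)).image i := by
    symm
    apply Finset.eq_of_subset_of_card_le
    · intro b hb
      obtain ⟨η, hη, rfl⟩ := Finset.mem_image.1 hb
      rw [mem_nthRootsFinset hd] at hη ⊢
      rw [← map_pow, hη, map_one]
    · rw [Finset.card_image_of_injective _ i.injective, hζ.card_nthRootsFinset,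
        hζ'.card_nthRootsFinset]
  rw [this, Finset.prod_image (fun _ _ _ _ h => i.injective h)]

/-- constants -/
noncomputable def cst (d : ℕ) (f : K[X]) : K →+* CurveRing K d f := (AdjoinRoot.of _).comp C

open Classical in
/-- the automorphism `y ↦ η y` -/
noncomputable def sig (d : ℕ) (f : K[X]) (η : K) : CurveRing K d f →+* CurveRing K d f :=
  if h : η ^ d = 1 then
    AdjoinRoot.lift (AdjoinRoot.of _) (cst d f η * AdjoinRoot.root _) (by
      simp [mul_pow, root_pow, ← map_pow, h])
  else RingHom.id _

theorem sig_of {η : K} (h : η ^ d = 1) (p : K[X]) :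
    sig d f η (AdjoinRoot.of _ p) = AdjoinRoot.of _ p := by
  rw [sig, dif_pos h, AdjoinRoot.lift_of]

theorem sig_root {η : K} (h : η ^ d = 1) :
    sig d f η (AdjoinRoot.root _) = cst d f η * AdjoinRoot.root _ := by
  rw [sig, dif_pos h, AdjoinRoot.lift_root]

theorem prod_sup_le {R ι : Type*} [CommRing R] (s : Finset ι) (I : Ideal R) (J : ι → Ideal R) :
    ∏ i ∈ s, (I ⊔ J i) ≤ I ⊔ ∏ i ∈ s, J i := by
  classical
  induction s using Finset.induction with
  | empty => simp
  | insert a s ha ih =>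
    rw [Finset.prod_insert ha, Finset.prod_insert ha]
    refine (Ideal.mul_mono_right ih).trans ?_
    rw [Ideal.sup_mul]
    refine sup_le (le_sup_of_le_left Ideal.mul_le_left) ?_
    rw [Ideal.mul_sup]
    exact sup_le (le_sup_of_le_left Ideal.mul_le_right) le_sup_right

theorem map_sig {η : K} (h : η ^ d = 1) (a c : K) :
    (ptIdeal d f a c).map (sig d f η) = Ideal.span {AdjoinRoot.of _ (X - C a)} ⊔
      Ideal.span {cst d f η * AdjoinRoot.root _ - cst d f c} := by
  have h1 : sig d f η (AdjoinRoot.root _ - AdjoinRoot.of _ (C c)) =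
      cst d f η * AdjoinRoot.root _ - cst d f c := by
    rw [RingHom.map_sub, sig_root h, sig_of h]; rfl
  rw [ptIdeal, Ideal.map_span, Set.image_pair, sig_of h, h1, Ideal.span_insert]

theorem prod_map_sig [IsDomain (CurveRing K d f)] {ζ : K}
    (hζ : IsPrimitiveRoot ζ d) (hd : 0 < d) (a c : K) (hc : c ≠ 0) (hP : c ^ d = f.eval a) :
    ∏ η ∈ nthRootsFinset d (1 : K), (ptIdeal d f a c).map (sig d f η) =
      Ideal.span {AdjoinRoot.of _ (X - C a)} := by
  have e : ∀ η ∈ nthRootsFinset d (1 : K), (ptIdeal d f a c).map (sig d f η) =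
      Ideal.span {AdjoinRoot.of _ (X - C a)} ⊔
      Ideal.span {cst d f η * AdjoinRoot.root _ - cst d f c} := fun η hη =>
    map_sig ((mem_nthRootsFinset hd 1).1 hη) a c
  rw [Finset.prod_congr rfl e]
  apply le_antisymm
  · refine (prod_sup_le _ _ _).trans (sup_le le_rfl ?_)
    rw [Ideal.prod_span_singleton, Ideal.span_singleton_le_span_singleton]
    have h1 : ∏ η ∈ nthRootsFinset d (1 : K), (cst d f η * AdjoinRoot.root _ - cst d f c) =
        (-1) ^ (nthRootsFinset d (1 : K)).card *
          (cst d f c ^ d - AdjoinRoot.root _ ^ d) := by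
      rw [← prod_roots (cst d f) hζ hd, ← Finset.prod_const, ← Finset.prod_mul_distrib]
      exact Finset.prod_congr rfl fun η _ => by ring
    rw [h1, root_pow, ← map_pow, hP]
    apply Dvd.dvd.mul_left
    have h2 : cst d f (eval a f) - AdjoinRoot.of _ f = AdjoinRoot.of _ (C (eval a f) - f) := by
      rw [map_sub]; rfl
    rw [h2]
    apply _root_.map_dvd
    rw [dvd_iff_isRoot]; simp
  · rw [Ideal.prod_eq_iInf_of_pairwise_isCoprime]
    · exact le_iInf₂ fun _ _ => le_sup_left
    · intro η hη θ hθ hne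
      rw [Function.onFun, Ideal.isCoprime_iff_sup_eq, Ideal.eq_top_iff_one]
      set I := (Ideal.span {AdjoinRoot.of ((X : K[X][X]) ^ d - C f) (X - C a)} ⊔
        Ideal.span {cst d f η * AdjoinRoot.root _ - cst d f c}) ⊔
        (Ideal.span {AdjoinRoot.of ((X : K[X][X]) ^ d - C f) (X - C a)} ⊔
        Ideal.span {cst d f θ * AdjoinRoot.root _ - cst d f c}) with hI
      have m1 : cst d f η * AdjoinRoot.root _ - cst d f c ∈ I :=
        (le_sup_right.trans le_sup_left : _ ≤ I) (Ideal.mem_span_singleton_self _)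
      have m2 : cst d f θ * AdjoinRoot.root _ - cst d f c ∈ I :=
        (le_sup_right.trans le_sup_right : _ ≤ I) (Ideal.mem_span_singleton_self _)
      have hne' : (η - θ) * c ≠ 0 := mul_ne_zero (sub_ne_zero.2 hne) hc
      have m3 := I.mul_mem_left (cst d f ((η - θ) * c)⁻¹)
        (I.sub_mem (I.mul_mem_left (cst d f θ) m1) (I.mul_mem_left (cst d f η) m2))
      convert m3 using 1
      have h1 : cst d f ((η - θ) * c)⁻¹ * ((cst d f η - cst d f θ) * cst d f c) = 1 := by
        rw [← map_sub, ← map_mul, ← map_mul, inv_mul_cancel₀ hne', map_one]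
      linear_combination -h1

theorem assoc_of_principal [IsDomain (CurveRing K d f)] {ζ : K}
    (hζ : IsPrimitiveRoot ζ d) (hd : 0 < d) (a c : K) (hc : c ≠ 0) (hP : c ^ d = f.eval a)
    (k : ℕ) (g : CurveRing K d f) (hg : ptIdeal d f a c ^ k = Ideal.span {g}) :
    Associated (∏ η ∈ nthRootsFinset d (1 : K), sig d f η g) (AdjoinRoot.of _ (X - C a) ^ k) := by
  rw [← Ideal.span_singleton_eq_span_singleton, ← Ideal.span_singleton_pow,
    ← prod_map_sig hζ hd a c hc hP, ← Finset.prod_pow, ← Ideal.prod_span_singleton]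
  refine Finset.prod_congr rfl fun η _ => ?_
  rw [← Ideal.map_pow, hg, Ideal.map_span, Set.image_singleton]

theorem wt_of_principal [IsAlgClosed K] [IsDomain (CurveRing K d f)] {ζ : K} (hf : f ≠ 0)
    (hn : f.natDegree = n) (hn0 : 0 < n) (hcop : d.Coprime n)
    (hζ : IsPrimitiveRoot ζ d) (hd : 0 < d) (a c : K) (hc : c ≠ 0) (hP : c ^ d = f.eval a)
    (k : ℕ) (p : ℕ → K[X]) (hg : ptIdeal d f a c ^ k =
      Ideal.span {∑ i ∈ Finset.range d, AdjoinRoot.of _ (p i) * (AdjoinRoot.root _) ^ i}) :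
    wt d n p = k := by
  obtain ⟨Γ, _, w, hw⟩ := exists_good (K := K) (f := f) hd
  have hX : 0 < w (AdjoinRoot.of ((X : K[X][X]) ^ d - C f) X) := zero_lt_one.trans hw.one_lt
  have h1 := assoc_of_principal hζ hd a c hc hP k _ hg
  obtain ⟨u, hu⟩ := h1
  obtain ⟨b, hb, hub⟩ := unit_const hf hn hn0 hd hcop (u : CurveRing K d f) u.isUnit
  have hwu : w (u : CurveRing K d f) = 1 := by
    rw [hub, hw.poly _ (C_ne_zero.2 hb)]; simp
  have hwa : w (AdjoinRoot.of _ (X - C a)) = w (AdjoinRoot.of _ X) := by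
    rw [hw.poly _ (X_sub_C_ne_zero a)]; simp
  have h2 := congrArg (fun z => w z ^ d) hu
  simp only [map_mul, map_prod, map_pow, hwu, hwa, mul_one] at h2
  have hp : ∃ i < d, p i ≠ 0 := by
    apply exists_ne (f := f)
    intro h0
    have h1 := assoc_of_principal hζ hd a c hc hP k _ hg
    rw [h0] at h1
    have : ∏ η ∈ nthRootsFinset d (1 : K), sig d f η 0 = 0 :=
      Finset.prod_eq_zero (i := 1) ((mem_nthRootsFinset hd 1).2 (one_pow d)) (map_zero _)
    rw [this] at h1
    have h3 := (associated_zero_iff_eq_zero _).1 h1.symm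
    have h4 := eq_zero_of_pow_eq_zero h3
    rw [h4, map_zero] at hwa
    exact hX.ne hwa
  have h3 : ∀ η ∈ nthRootsFinset d (1 : K), w (sig d f η
      (∑ i ∈ Finset.range d, AdjoinRoot.of _ (p i) * (AdjoinRoot.root _) ^ i)) ^ d =
      w (AdjoinRoot.of _ X) ^ wt d n p := by
    intro η hη
    have hη := (mem_nthRootsFinset hd 1).1 hη
    have hη0 : η ≠ 0 := by rintro rfl; rw [zero_pow hd.ne'] at hη; exact zero_ne_one hη
    have e1 : sig d f η (∑ i ∈ Finset.range d, AdjoinRoot.of _ (p i) * (AdjoinRoot.root _) ^ i)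
        = ∑ i ∈ Finset.range d, AdjoinRoot.of _ (C (η ^ i) * p i) * (AdjoinRoot.root _) ^ i := by
      rw [map_sum]
      refine Finset.sum_congr rfl fun i _ => ?_
      rw [map_mul, map_pow, sig_of hη, sig_root hη, mul_pow, map_mul, ← map_pow]
      change _ * (AdjoinRoot.of _ (C (η ^ i)) * _) = _
      ring
    rw [e1, hw.sum hf hn hd hcop]
    · congr 1
      unfold wt
      congr 1
      ext i
      have hx : C (η ^ i) ≠ 0 := C_ne_zero.2 (pow_ne_zero i hη0)
      have hy : (C (η ^ i) * p i).natDegree = (p i).natDegree :=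
        natDegree_C_mul (pow_ne_zero i hη0)
      rw [hy]
      by_cases h : p i = 0
      · rw [if_pos h, if_pos (by simp only [h, mul_zero])]
      · rw [if_neg h, if_neg (mul_ne_zero hx h)]
    · obtain ⟨i, hi, h⟩ := hp
      exact ⟨i, hi, by simp [h, hη0]⟩
  rw [← Finset.prod_pow, Finset.prod_congr rfl h3, Finset.prod_const, hζ.card_nthRootsFinset,
    ← pow_mul, ← pow_mul] at h2
  have h4 := (pow_right_inj₀ hX hw.one_lt.ne').1 h2
  exact Nat.eq_of_mul_eq_mul_right hd h4

end ring
end CurveAux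

namespace CurveAux

section ring
variable {K : Type*} [Field K] {d n : ℕ} {f : K[X]}

theorem sup_pow_le' {R : Type*} [CommRing R] (I J : Ideal R) (k : ℕ) :
    (I ⊔ J) ^ k ≤ I ⊔ J ^ k := by
  have := prod_sup_le (Finset.range k) I (fun _ => J)
  simpa using this

theorem ptIdeal_eq (a c : K) : ptIdeal d f a c = Ideal.span {AdjoinRoot.of _ (X - C a)} ⊔
      Ideal.span {AdjoinRoot.root _ - cst d f c} := by
  rw [ptIdeal, Ideal.span_insert]; rfl

theorem mem1 (a c : K) : AdjoinRoot.of _ (X - C a) ∈ ptIdeal d f a c :=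
  Ideal.subset_span (by simp)

theorem mem2 (a c : K) : AdjoinRoot.root _ - cst d f c ∈ ptIdeal d f a c :=
  Ideal.subset_span (by right; rfl)

/-- evaluation at a point -/
noncomputable def ev (a c : K) (h : c ^ d = f.eval a) : CurveRing K d f →+* K :=
  AdjoinRoot.lift (evalRingHom a) c (by simp [h])

theorem ev_of (a c : K) (h : c ^ d = f.eval a) (p : K[X]) :
    ev a c h (AdjoinRoot.of _ p) = p.eval a := by
  rw [ev, AdjoinRoot.lift_of]; rfl

theorem ev_root (a c : K) (h : c ^ d = f.eval a) :
    ev a c h (AdjoinRoot.root _) = c := by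
  rw [ev, AdjoinRoot.lift_root]

theorem ev_cst (a c : K) (h : c ^ d = f.eval a) (b : K) :
    ev a c h (cst d f b) = b := by
  change ev a c h (AdjoinRoot.of _ (C b)) = b
  rw [ev_of, eval_C]

theorem le_ker (a c : K) (h : c ^ d = f.eval a) : ptIdeal d f a c ≤ RingHom.ker (ev a c h) := by
  rw [ptIdeal_eq, sup_le_iff, Ideal.span_singleton_le_iff_mem, Ideal.span_singleton_le_iff_mem,
    RingHom.mem_ker, RingHom.mem_ker, ev_of, RingHom.map_sub, ev_root, ev_cst]
  simp

theorem sq_contra (hsqf : Squarefree f) (a : K) (h : (X - C a) * (X - C a) ∣ f) : False :=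
  not_isUnit_X_sub_C a (hsqf _ h)

theorem zero_case (hd : 0 < d) (hsqf : Squarefree f) (a : K) (h0 : f.eval a = 0) :
    (ptIdeal d f a 0 ^ d) = Ideal.span {AdjoinRoot.of _ (X - C a)} := by
  obtain ⟨h, rfl⟩ := dvd_iff_isRoot.2 h0
  have hcop : IsCoprime ((X - C a) ^ (d - 1)) h := by
    apply IsCoprime.pow_left
    rw [(irreducible_X_sub_C a).coprime_iff_not_dvd]
    intro hh
    exact sq_contra hsqf a (mul_dvd_mul_left _ hh)
  apply le_antisymm
  · rw [ptIdeal_eq]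
    refine (sup_pow_le' _ _ _).trans (sup_le le_rfl ?_)
    rw [Ideal.span_singleton_pow, Ideal.span_singleton_le_span_singleton, map_zero, sub_zero,
      root_pow]
    exact _root_.map_dvd _ (dvd_mul_right _ _)
  · rw [Ideal.span_singleton_le_iff_mem]
    obtain ⟨s, t, hst⟩ := hcop
    have e : X - C a = s * (X - C a) ^ d + t * ((X - C a) * h) := by
      obtain ⟨e, rfl⟩ : ∃ e, d = e + 1 := ⟨d - 1, by omega⟩
      simp only [Nat.add_sub_cancel] at hst
      linear_combination -(X - C a) * hst
    have m2 := Ideal.pow_mem_pow (mem2 (d := d) (f := (X - C a) * h) a 0) d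
    rw [map_zero, sub_zero, root_pow] at m2
    have m1 := Ideal.pow_mem_pow (mem1 (d := d) (f := (X - C a) * h) a 0) d
    have := Ideal.add_mem _ (Ideal.mul_mem_left _ (AdjoinRoot.of _ s) m1)
      (Ideal.mul_mem_left _ (AdjoinRoot.of _ t) m2)
    rw [← map_pow, ← map_mul, ← map_mul, ← map_add, ← e] at this
    exact this

theorem char_fwd [IsAlgClosed K] [CharZero K] [IsDomain (CurveRing K d f)] (hd : 4 ≤ d)
    (hf : f.Monic) (hn : f.natDegree = d + 1) (hsqf : Squarefree f) (a c : K)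
    (hP : c ^ d = f.eval a) (ht : IsTorsionOfOrder d f a c (d + 1)) :
    c ≠ 0 ∧ ∃ α β : K, f = (X - C a) ^ (d + 1) + (C α * X + C β) ^ d ∧ α * a + β = c := by
  have hd0 : 0 < d := by omega
  have : NeZero (d : K) := ⟨by exact_mod_cast hd0.ne'⟩
  obtain ⟨ζ, hζ⟩ := HasEnoughRootsOfUnity.exists_primitiveRoot K d
  have hcop : d.Coprime (d + 1) := by simp
  have hc : c ≠ 0 := by
    rintro rfl
    rw [zero_pow hd0.ne'] at hP
    have h1 := ht.2 ⟨hd0, by rw [zero_case hd0 hsqf a hP.symm]; exact ⟨_, rfl⟩⟩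
    omega
  refine ⟨hc, ?_⟩
  obtain ⟨⟨-, g, hg⟩, -⟩ := ht
  change _ = Ideal.span {g} at hg
  obtain ⟨p, hp⟩ := exists_rep hd0 g
  have hwt := wt_of_principal hf.ne_zero hn (by omega) hcop hζ hd0 a c hc hP (d + 1) p (hp ▸ hg)
  have hass := assoc_of_principal hζ hd0 a c hc hP _ _ hg
  have h1 : ∀ i < d, p i ≠ 0 → (i = 0 ∧ (p i).natDegree ≤ 1) ∨ (i = 1 ∧ (p i).natDegree = 0) := by
    intro i hi h
    have := le_wt (n := d + 1) p hi h
    rw [hwt] at this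
    rcases i with _ | _ | i
    · left
      refine ⟨rfl, ?_⟩
      by_contra! h2
      have : d * 2 ≤ d * (p 0).natDegree := by gcongr; omega
      omega
    · right
      refine ⟨rfl, ?_⟩
      have : d * (p 1).natDegree = 0 := by simp only [zero_add] at this; omega
      simpa [hd0.ne'] using this
    · exfalso
      have h3 : (d + 1) * 2 ≤ (d + 1) * (i + 1 + 1) := by gcongr; omega
      omega
  have h2 : (p 0).natDegree ≤ 1 := by
    by_cases h : p 0 = 0
    · simp [h]
    · rcases h1 0 hd0 h with h | h <;> omega
  have h3 : p 1 ≠ 0 := by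
    intro h3
    have : wt d (d + 1) p ≤ d := by
      refine Finset.sup_le fun i hi => ?_
      split_ifs with h
      · omega
      · rcases h1 i (Finset.mem_range.1 hi) h with ⟨rfl, h4⟩ | ⟨rfl, h4⟩
        · have : d * (p 0).natDegree ≤ d * 1 := by gcongr
          omega
        · exact absurd h3 h
    omega
  obtain ⟨γ, hγ⟩ : ∃ γ, p 1 = C γ := ⟨_, eq_C_of_natDegree_eq_zero (by
    rcases h1 1 (by omega) h3 with h | h <;> omega)⟩
  have hγ0 : γ ≠ 0 := by rintro rfl; simp at hγ; exact h3 hγ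
  have hg2 : g = AdjoinRoot.of _ (p 0) + AdjoinRoot.of _ (p 1) * AdjoinRoot.root _ := by
    rw [hp, ← Finset.sum_subset (s₁ := {0, 1})]
    · simp
    · intro i hi
      simp at hi
      rw [Finset.mem_range]; omega
    · intro i hi hi2
      by_cases h : p i = 0
      · simp [h]
      · exfalso
        apply hi2
        rcases h1 i (Finset.mem_range.1 hi) h with h | h <;> simp [h.1]
  -- the line
  set α : K := -γ⁻¹ * (p 0).coeff 1 with hα
  set β : K := -γ⁻¹ * (p 0).coeff 0 with hβ
  have hp0 : p 0 = C (-γ) * (C α * X + C β) := by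
    conv_lhs => rw [eq_X_add_C_of_natDegree_le_one h2]
    have e1 : (p 0).coeff 1 = -γ * α := by rw [hα]; field_simp
    have e0 : (p 0).coeff 0 = -γ * β := by rw [hβ]; field_simp
    rw [e1, e0]
    simp only [C_mul, C_neg]; ring
  set l : K[X] := C α * X + C β with hl
  have hg3 : g = cst d f (-γ) * (AdjoinRoot.of _ l - AdjoinRoot.root _) := by
    rw [hg2, hp0, hγ, map_mul]
    have : AdjoinRoot.of ((X : K[X][X]) ^ d - C f) (C γ) = -cst d f (-γ) := by
      rw [← map_neg, neg_neg]; rfl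
    rw [this]
    change cst d f (-γ) * _ + _ = _
    ring
  have hprod : ∏ η ∈ nthRootsFinset d (1 : K), sig d f η g =
      AdjoinRoot.of _ (C ((-γ) ^ d) * (l ^ d - f)) := by
    have e1 : ∀ η ∈ nthRootsFinset d (1 : K), sig d f η g =
        cst d f (-γ) * (AdjoinRoot.of _ l - cst d f η * AdjoinRoot.root _) := by
      intro η hη
      have hη := (mem_nthRootsFinset hd0 1).1 hη
      rw [hg3, RingHom.map_mul, RingHom.map_sub, sig_of hη, sig_root hη]
      congr 1
      exact sig_of hη _
    rw [Finset.prod_congr rfl e1, Finset.prod_mul_distrib, Finset.prod_const,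
      hζ.card_nthRootsFinset, prod_roots (cst d f) hζ hd0, root_pow, ← map_pow, ← map_pow,
      ← map_sub, map_mul]
    rfl
  rw [hprod] at hass
  obtain ⟨u, hu⟩ := hass
  obtain ⟨b, hb, hub⟩ := unit_const hf.ne_zero hn (by omega) hd0 hcop (u : CurveRing K d f) u.isUnit
  rw [hub, ← map_mul, ← map_pow] at hu
  have hu2 := of_inj hd0 hu
  have hu3 : (X - C a) ^ (d + 1) = C ((-γ) ^ d * b) * (l ^ d - f) := by
    rw [← hu2, C_mul]; ring
  have hldeg : (l ^ d).natDegree ≤ d := by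
    refine natDegree_pow_le.trans ?_
    have : l.natDegree ≤ 1 := natDegree_linear_le
    nlinarith
  have hcoef := congrArg (fun q => coeff q (d + 1)) hu3
  have hlc : (l ^ d).coeff (d + 1) = 0 := coeff_eq_zero_of_natDegree_lt (by omega)
  have hfc : f.coeff (d + 1) = 1 := by rw [← hn]; exact hf
  have hxc : ((X - C a) ^ (d + 1)).coeff (d + 1) = 1 := by
    have h := (monic_X_sub_C a).pow (d + 1)
    have h' : ((X - C a) ^ (d + 1)).natDegree = d + 1 := by simp
    rw [Monic, leadingCoeff, h'] at h
    exact h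
  simp only [coeff_C_mul, coeff_sub, hlc, hfc, hxc] at hcoef
  have hκ : (-γ) ^ d * b = -1 := by linear_combination hcoef
  rw [hκ] at hu3
  refine ⟨α, β, ?_, ?_⟩
  · rw [hu3, ← hl]; simp
  · have m : g ∈ RingHom.ker (ev a c hP) := by
      apply le_ker a c hP
      apply Ideal.pow_le_self (n := d + 1) (by omega)
      rw [hg]; exact Ideal.mem_span_singleton_self g
    rw [RingHom.mem_ker, hg3, RingHom.map_mul, RingHom.map_sub, ev_cst, ev_of, ev_root] at m
    have := (mul_eq_zero.1 m).resolve_left (neg_ne_zero.2 hγ0)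
    simp [hl] at this
    linear_combination this

theorem char_bwd [IsAlgClosed K] [CharZero K] [IsDomain (CurveRing K d f)] (hd : 4 ≤ d)
    (hf : f.Monic) (hn : f.natDegree = d + 1) (hsqf : Squarefree f) (a c α β : K)
    (hfe : f = (X - C a) ^ (d + 1) + (C α * X + C β) ^ d) (hac : α * a + β = c) :
    c ^ d = f.eval a ∧ IsTorsionOfOrder d f a c (d + 1) := by
  have hd0 : 0 < d := by omega
  have : NeZero (d : K) := ⟨by exact_mod_cast hd0.ne'⟩
  obtain ⟨ζ, hζ⟩ := HasEnoughRootsOfUnity.exists_primitiveRoot K d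
  have hcop : d.Coprime (d + 1) := by simp
  have hP : c ^ d = f.eval a := by rw [hfe]; simp [hac]
  refine ⟨hP, ?_⟩
  set l : K[X] := C α * X + C β with hl
  have hlX : l = C α * (X - C a) + C c := by rw [hl, ← hac]; simp only [C_add, C_mul]; ring
  have hc : c ≠ 0 := by
    rintro rfl
    apply sq_contra hsqf a
    rw [hfe, hlX]
    apply dvd_add
    · rw [← sq]; exact pow_dvd_pow _ (by omega)
    · rw [C_0, add_zero, mul_pow, ← sq]
      exact (pow_dvd_pow _ (by omega)).mul_left _
  set g : CurveRing K d f := AdjoinRoot.root _ - AdjoinRoot.of _ l with hg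
  set Q : CurveRing K d f := ∑ i ∈ Finset.range d,
    AdjoinRoot.root _ ^ i * AdjoinRoot.of _ l ^ (d - 1 - i) with hQ
  have hQg : Q * g = AdjoinRoot.of _ (X - C a) ^ (d + 1) := by
    rw [hQ, hg, (Commute.all _ _).geom_sum₂_mul, root_pow, ← map_pow, ← map_pow, ← map_sub]
    congr 1
    conv_lhs => rw [hfe]
    ring
  have hel : l.eval a = c := by simp [hl, hac]
  have hQev : ev a c hP Q ≠ 0 := by
    have : ev a c hP Q = d * c ^ (d - 1) := by
      rw [hQ, map_sum]
      have : ∀ i ∈ Finset.range d, ev a c hP (AdjoinRoot.root _ ^ i *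
          AdjoinRoot.of _ l ^ (d - 1 - i)) = c ^ (d - 1) := by
        intro i hi
        rw [Finset.mem_range] at hi
        rw [RingHom.map_mul, RingHom.map_pow, RingHom.map_pow, ev_root, ev_of, hel, ← pow_add]
        congr 1; omega
      rw [Finset.sum_congr rfl this]; simp
    rw [this]
    exact mul_ne_zero (NeZero.ne _) (pow_ne_zero _ hc)
  have hker : ∀ z, z - cst d f (ev a c hP z) ∈ ptIdeal d f a c := by
    intro z
    obtain ⟨q, hq⟩ := exists_rep hd0 z
    have e : Ideal.Quotient.mk (ptIdeal d f a c) = 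
        ((Ideal.Quotient.mk (ptIdeal d f a c)).comp (cst d f)).comp (ev a c hP) := by
      apply AdjoinRoot.ringHom_ext
      · apply Polynomial.ringHom_ext
        · intro b
          simp only [RingHom.comp_apply]
          rw [ev_of, eval_C]; rfl
        · simp only [RingHom.comp_apply]
          rw [ev_of, eval_X, Ideal.Quotient.eq]
          have := mem1 (d := d) (f := f) a c
          rw [map_sub] at this
          exact this
      · simp only [RingHom.comp_apply]
        rw [ev_root, Ideal.Quotient.eq]
        exact mem2 a c
    have := congrArg (fun φ => φ z) e
    simp only [RingHom.comp_apply] at this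
    exact Ideal.Quotient.eq.1 this
  have hspan : ptIdeal d f a c ^ (d + 1) = Ideal.span {g} := by
    apply le_antisymm
    · have h1 : ptIdeal d f a c ≤ Ideal.span {g} ⊔ Ideal.span {AdjoinRoot.of _ (X - C a)} := by
        rw [ptIdeal_eq]
        refine sup_le le_sup_right ?_
        rw [Ideal.span_singleton_le_iff_mem]
        have e : AdjoinRoot.root _ - cst d f c = g + cst d f α * AdjoinRoot.of _ (X - C a) := by
          rw [hg, hlX, map_add, map_mul]
          change _ = _ - (cst d f α * _ + cst d f c) + _
          ring
        rw [e]
        exact Ideal.add_mem _ (Ideal.mem_sup_left (Ideal.mem_span_singleton_self _))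
          (Ideal.mul_mem_left _ _ (Ideal.mem_sup_right (Ideal.mem_span_singleton_self _)))
      refine (Ideal.pow_right_mono h1 _).trans ((sup_pow_le' _ _ _).trans (sup_le le_rfl ?_))
      rw [Ideal.span_singleton_pow, Ideal.span_singleton_le_span_singleton, ← hQg]
      exact dvd_mul_left _ _
    · rw [Ideal.span_singleton_le_iff_mem]
      have h1 : ptIdeal d f a c ⊔ Ideal.span {Q} = ⊤ := by
        rw [Ideal.eq_top_iff_one]
        have m1 := hker Q
        have m2 := Ideal.add_mem _ (Ideal.mem_sup_right (S := ptIdeal d f a c)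
          (Ideal.mem_span_singleton_self Q))
          (Ideal.mem_sup_left (T := Ideal.span {Q}) (Ideal.neg_mem_iff _ |>.2 m1))
        have m3 := Ideal.mul_mem_left _ (cst d f (ev a c hP Q)⁻¹) m2
        have e : cst d f (ev a c hP Q)⁻¹ * (Q + -(Q - cst d f (ev a c hP Q))) = 1 := by
          have : cst d f (ev a c hP Q)⁻¹ * cst d f (ev a c hP Q) = 1 := by
            rw [← map_mul, inv_mul_cancel₀ hQev, map_one]
          linear_combination this
        rwa [e] at m3
      have h2 := Ideal.pow_sup_eq_top (n := d + 1) h1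
      rw [Ideal.eq_top_iff_one, Submodule.mem_sup] at h2
      obtain ⟨s, hs, t, ht, hst⟩ := h2
      obtain ⟨r, rfl⟩ := Ideal.mem_span_singleton'.1 ht
      have e : g = g * s + r * AdjoinRoot.of _ (X - C a) ^ (d + 1) := by
        rw [← hQg]; linear_combination -g * hst
      rw [e]
      exact Ideal.add_mem _ (Ideal.mul_mem_left _ _ hs)
        (Ideal.mul_mem_left _ _ (Ideal.pow_mem_pow (mem1 a c) _))
  refine ⟨⟨by omega, by rw [hspan]; exact ⟨_, rfl⟩⟩, ?_⟩
  rintro k ⟨hk, z, hz⟩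
  change _ = Ideal.span {z} at hz
  by_contra! hkd
  obtain ⟨p, hp⟩ := exists_rep hd0 z
  have hwt := wt_of_principal hf.ne_zero hn (by omega) hcop hζ hd0 a c hc hP k p (hp ▸ hz)
  have h1 : ∀ i < d, p i ≠ 0 → i = 0 ∧ d * (p i).natDegree ≤ k := by
    intro i hi h
    have := le_wt (n := d + 1) p hi h
    rw [hwt] at this
    rcases i with _ | i
    · exact ⟨rfl, by omega⟩
    · exfalso
      have h3 : (d + 1) * 1 ≤ (d + 1) * (i + 1) := by gcongr; omega
      omega
  have hz0 : z = AdjoinRoot.of _ (p 0) := by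
    rw [hp, Finset.sum_eq_single 0]
    · simp
    · intro i hi hi0
      by_cases h : p i = 0
      · simp [h]
      · exact absurd (h1 i (Finset.mem_range.1 hi) h).1 hi0
    · simp [hd0]
  have hmem : z ∈ RingHom.ker (ev a c hP) := by
    apply le_ker a c hP
    apply Ideal.pow_le_self (n := k) (by omega)
    rw [hz]; exact Ideal.mem_span_singleton_self z
  rw [RingHom.mem_ker, hz0, ev_of] at hmem
  -- evaluate at the conjugate point
  have hζ1 : ζ ≠ 1 := hζ.ne_one (by omega)
  have hP' : (ζ * c) ^ d = f.eval a := by rw [mul_pow, hζ.pow_eq_one, one_mul, hP]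
  have hm : (AdjoinRoot.root _ - cst d f c) ^ k ∈ Ideal.span {z} := by
    rw [← hz]; exact Ideal.pow_mem_pow (mem2 a c) k
  obtain ⟨r, hr⟩ := Ideal.mem_span_singleton'.1 hm
  have := congrArg (ev a (ζ * c) hP') hr
  rw [RingHom.map_mul, hz0, ev_of, hmem, mul_zero, RingHom.map_pow, RingHom.map_sub, ev_root,
    ev_cst] at this
  have h5 := eq_zero_of_pow_eq_zero this.symm
  have h6 : (ζ - 1) * c = 0 := by linear_combination h5
  rcases mul_eq_zero.1 h6 with h | h
  · exact hζ1 (sub_eq_zero.1 h)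
  · exact hc h

theorem coeff_lin_pow (α β : K) (D j : ℕ) (hj : j ≤ D) :
    ((C α * X + C β) ^ D).coeff (D - j) = D.choose j * (α ^ (D - j) * β ^ j) := by
  have h : (C α * X + C β) ^ D = ∑ m ∈ Finset.range (D + 1),
      C (α ^ m * β ^ (D - m) * (D.choose m : K)) * X ^ m := by
    rw [add_pow]
    refine Finset.sum_congr rfl fun m _ => ?_
    simp only [C_mul, C_pow, mul_pow, ← C_eq_natCast]
    simp
    ring
  rw [h, finsetSum_coeff]
  simp only [coeff_C_mul_X_pow]
  rw [Finset.sum_ite_eq, if_pos (by simp), Nat.choose_symm hj]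
  have : D - (D - j) = j := by omega
  rw [this]; ring

theorem unique_a [CharZero K] (hd : 4 ≤ d) (a b α β γ δ : K)
    (h : (X - C a) ^ (d + 1) + (C α * X + C β) ^ d =
      (X - C b) ^ (d + 1) + (C γ * X + C δ) ^ d) : a = b := by
  have key : ∀ j ≤ d, ((d : K) + 1) * ((-a) ^ (j + 1) - (-b) ^ (j + 1)) =
      (j + 1) * (γ ^ (d - j) * δ ^ j - α ^ (d - j) * β ^ j) := by
    intro j hj
    have h1 := congrArg (fun q => coeff q (d - j)) h
    have ea : ∀ a : K, X - C a = C 1 * X + C (-a) := by intro a; simp [sub_eq_add_neg]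
    have ed : d - j = (d + 1) - (j + 1) := by omega
    simp only [coeff_add] at h1
    rw [coeff_lin_pow _ _ _ _ hj, coeff_lin_pow _ _ _ _ hj, ea a, ea b] at h1
    have e2 := coeff_lin_pow (1 : K) (-a) (d + 1) (j + 1) (by omega)
    have e3 := coeff_lin_pow (1 : K) (-b) (d + 1) (j + 1) (by omega)
    rw [← ed] at e2 e3
    rw [e2, e3] at h1
    simp only [one_pow, one_mul] at h1
    have h2 : ((d : K) + 1) * d.choose j = (d + 1).choose (j + 1) * (j + 1) := by
      exact_mod_cast Nat.add_one_mul_choose_eq d j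
    have h3 : (d.choose j : K) ≠ 0 := by exact_mod_cast (Nat.choose_pos hj).ne'
    apply mul_left_cancel₀ h3
    linear_combination ((-a) ^ (j + 1) - (-b) ^ (j + 1)) * h2 + ((j : K) + 1) * h1
  obtain ⟨e, rfl⟩ : ∃ e, d = e + 4 := ⟨d - 4, by omega⟩
  have k0 := key 0 (by omega)
  have k1 := key 1 (by omega)
  have k2 := key 2 (by omega)
  have k3 := key 3 (by omega)
  have k4 := key 4 (by omega)
  have e1 : e + 4 - 1 = e + 3 := by omega
  have e2 : e + 4 - 2 = e + 2 := by omega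
  have e3 : e + 4 - 3 = e + 1 := by omega
  have e4 : e + 4 - 4 = e := by omega
  simp only [e1, e2, e3, e4, Nat.sub_zero, pow_add] at k0 k1 k2 k3 k4
  set M := γ ^ e
  set N := α ^ e
  have hN : (((e + 4 : ℕ) : K) + 1) ≠ 0 := by exact_mod_cast (Nat.succ_ne_zero (e + 4))
  set ν : K := ((e + 4 : ℕ) : K) + 1
  push_cast at k0 k1 k2 k3 k4
  obtain ⟨h0, q0⟩ : ∃ h0, h0 = M * γ ^ 4 - N * α ^ 4 := ⟨_, rfl⟩
  obtain ⟨h1, q1⟩ : ∃ h1, h1 = M * γ ^ 3 * δ - N * α ^ 3 * β := ⟨_, rfl⟩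
  obtain ⟨h2, q2⟩ : ∃ h2, h2 = M * γ ^ 2 * δ ^ 2 - N * α ^ 2 * β ^ 2 := ⟨_, rfl⟩
  obtain ⟨h3, q3⟩ : ∃ h3, h3 = M * γ * δ ^ 3 - N * α * β ^ 3 := ⟨_, rfl⟩
  obtain ⟨h4, q4⟩ : ∃ h4, h4 = M * δ ^ 4 - N * β ^ 4 := ⟨_, rfl⟩
  have hdet : h0 * h2 * h4 + 2 * h1 * h2 * h3 - h2 ^ 3 - h0 * h3 ^ 2 - h1 ^ 2 * h4 = 0 := by
    rw [q0, q1, q2, q3, q4]; ring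
  have r0 : h0 = ν * (b - a) := by rw [q0]; linear_combination -k0
  have r1 : h1 = ν * (a ^ 2 - b ^ 2) / 2 := by rw [q1]; linear_combination -k1 / 2
  have r2 : h2 = ν * (b ^ 3 - a ^ 3) / 3 := by rw [q2]; linear_combination -k2 / 3
  have r3 : h3 = ν * (a ^ 4 - b ^ 4) / 4 := by rw [q3]; linear_combination -k3 / 4
  have r4 : h4 = ν * (b ^ 5 - a ^ 5) / 5 := by rw [q4]; linear_combination -k4 / 5
  have hfin : ν ^ 3 * (b - a) ^ 9 = 0 := by
    have : ν ^ 3 * (b - a) ^ 9 = 2160 * (h0 * h2 * h4 + 2 * h1 * h2 * h3 - h2 ^ 3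
        - h0 * h3 ^ 2 - h1 ^ 2 * h4) := by
      rw [r0, r1, r2, r3, r4]; field_simp; ring
    rw [this, hdet, mul_zero]
  have := (mul_eq_zero.1 hfin).resolve_left (pow_ne_zero _ hN)
  exact (sub_eq_zero.1 (eq_zero_of_pow_eq_zero this)).symm

end ring
end CurveAux

theorem stmt_11 {K : Type*} [Field K] [IsAlgClosed K] [CharZero K] (d n : ℕ)
    (hn : 5 ≤ n) (hd : d = n - 1)
    (f : K[X]) (hmonic : f.Monic) (hdeg : f.natDegree = n) (hsqf : Squarefree f)
    (hDed : IsDedekindDomain (CurveRing K d f)) :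
    {P : K × K | P.2 ^ d = f.eval P.1 ∧ IsTorsionOfOrder d f P.1 P.2 n}.ncard = 0 ∨
    {P : K × K | P.2 ^ d = f.eval P.1 ∧ IsTorsionOfOrder d f P.1 P.2 n}.ncard = n - 1 := by
  have hdn : n = d + 1 := by omega
  subst hdn
  have hd4 : 4 ≤ d := by omega
  have hd0 : 0 < d := by omega
  have : IsDomain (CurveRing K d f) := hDed.toIsDomain
  have : NeZero (d : K) := ⟨by exact_mod_cast hd0.ne'⟩
  obtain ⟨ζ, hζ⟩ := HasEnoughRootsOfUnity.exists_primitiveRoot K d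
  rcases Set.eq_empty_or_nonempty
    {P : K × K | P.2 ^ d = f.eval P.1 ∧ IsTorsionOfOrder d f P.1 P.2 (d + 1)} with h | ⟨⟨a, c⟩, h⟩
  · left; rw [h]; simp
  · right
    obtain ⟨hP, ht⟩ := h
    simp only at hP ht
    obtain ⟨hc, α, β, hfe, hac⟩ := CurveAux.char_fwd hd4 hmonic hdeg hsqf a c hP ht
    have hS : {P : K × K | P.2 ^ d = f.eval P.1 ∧ IsTorsionOfOrder d f P.1 P.2 (d + 1)} =
        (fun η : K => (a, η * c)) '' (nthRootsFinset d (1 : K) : Set K) := by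
      ext ⟨a', c'⟩
      simp only [Set.mem_setOf_eq, Set.mem_image, Finset.mem_coe, mem_nthRootsFinset hd0]
      constructor
      · rintro ⟨hP', ht'⟩
        obtain ⟨hc', α', β', hfe', hac'⟩ := CurveAux.char_fwd hd4 hmonic hdeg hsqf a' c' hP' ht'
        have haa : a = a' := CurveAux.unique_a hd4 a a' α β α' β' (by rw [← hfe, ← hfe'])
        subst haa
        refine ⟨c' / c, ?_, ?_⟩
        · rw [div_pow, hP', hP, div_self]
          rw [← hP]; exact pow_ne_zero _ hc
        · rw [div_mul_cancel₀ _ hc]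
      · rintro ⟨η, hη, he⟩
        obtain ⟨rfl, rfl⟩ := Prod.mk.inj he
        refine CurveAux.char_bwd hd4 hmonic hdeg hsqf a (η * c) (η * α) (η * β) ?_ ?_
        · have : C (η * α) * X + C (η * β) = C η * (C α * X + C β) := by
            simp only [C_mul]; ring
          rw [this, mul_pow, ← C_pow, hη, C_1, one_mul]
          exact hfe
        · rw [← hac]; ring
    rw [hS, Set.ncard_image_of_injective, Set.ncard_coe_finset, hζ.card_nthRootsFinset]
    · rfl
    · intro x y hxy
      exact mul_right_cancel₀ hc (Prod.mk.inj hxy).2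
end

section
/- Let K be an algebraically closed field of characteristic 0 and let n ≥ 5 be an integer. Then there do not exist elements α, β, γ, δ ∈ K such that the polynomial identity X^n + (αX + β)^{n−1} = (X + 1)^n + (γX + δ)^{n−1} holds in K[X] and the polynomial X^n + (αX + β)^{n−1} has no repeated roots. -/
open Polynomial

theorem aux_coeff {K : Type*} [Field K] (a b : K) (t j : ℕ) :
    ((C a * X + C b : K[X]) ^ (t + j)).coeff t = a ^ t * b ^ j * ((t + j).choose j : K) := by
  rw [add_pow, finsetSum_coeff, Finset.sum_eq_single t]
  · rw [mul_pow, ← C_pow, ← C_pow, ← C_eq_natCast, coeff_mul_C, coeff_mul_C, coeff_C_mul,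
      coeff_X_pow_self, Nat.add_sub_cancel_left, Nat.choose_symm_add]
    ring
  · intro k _ hk
    rw [mul_pow, ← C_pow, ← C_pow, ← C_eq_natCast, coeff_mul_C, coeff_mul_C, coeff_C_mul,
      coeff_X_pow, if_neg (Ne.symm hk)]
    ring
  · intro h
    exact absurd (Finset.mem_range.2 (by omega)) h

theorem aux_u {K : Type*} [Field K] [CharZero K] (α β γ δ : K) (s j : ℕ)
    (h : (X : K[X]) ^ (s + j + 1) + (C α * X + C β) ^ (s + j) =
        (X + 1) ^ (s + j + 1) + (C γ * X + C δ) ^ (s + j)) :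
    (α ^ s * β ^ j - γ ^ s * δ ^ j) * (j + 1) = (s + j + 1 : K) := by
  have h1 := congrArg (fun p => coeff p s) h
  have h2 := aux_coeff (1 : K) 1 s (j + 1)
  simp only [coeff_add, aux_coeff, coeff_X_pow] at h1
  rw [if_neg (by omega)] at h1
  simp only [C_1, one_mul, one_pow, ← add_assoc] at h2
  rw [h2] at h1
  have h3 : ((s + j : ℕ) + 1 : K) * ((s + j).choose j : K)
      = ((s + j + 1).choose (j + 1) : K) * (j + 1) := by
    exact_mod_cast Nat.add_one_mul_choose_eq (s + j) j
  have h4 : ((s + j).choose j : K) ≠ 0 := by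
    exact_mod_cast (Nat.choose_pos (by omega)).ne'
  push_cast at h3
  apply mul_right_cancel₀ h4
  linear_combination (j + 1 : K) * h1 - h3

theorem stmt_12 {K : Type*} [Field K] [IsAlgClosed K] [CharZero K]
    (n : ℕ) (hn : 5 ≤ n) :
    ¬ ∃ α β γ δ : K,
      (X : K[X]) ^ n + (C α * X + C β) ^ (n - 1) =
        (X + 1) ^ n + (C γ * X + C δ) ^ (n - 1) ∧
      Squarefree ((X : K[X]) ^ n + (C α * X + C β) ^ (n - 1)) := by
  rintro ⟨α, β, γ, δ, h, -⟩
  obtain ⟨t, rfl⟩ := Nat.exists_eq_add_of_le' hn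
  have h : (X : K[X]) ^ (t + 4 + 1) + (C α * X + C β) ^ (t + 4) =
        (X + 1) ^ (t + 4 + 1) + (C γ * X + C δ) ^ (t + 4) := h
  have u0 := aux_u α β γ δ (t + 4) 0 h
  have u1 := aux_u α β γ δ (t + 3) 1 h
  have u2 := aux_u α β γ δ (t + 2) 2 h
  have u3 := aux_u α β γ δ (t + 1) 3 h
  have u4 := aux_u α β γ δ t 4 h
  push_cast at u0 u1 u2 u3 u4
  simp only [pow_add] at u0 u1 u2 u3 u4
  have hN : (t + 5 : K) ≠ 0 := by exact_mod_cast (Nat.succ_ne_zero (t + 4))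
  generalize α ^ t = A at *
  generalize γ ^ t = B at *
  generalize hT : (t + 5 : K) = N at *
  have e : (t : K) = N - 5 := by rw [← hT]; ring
  rw [e] at u0 u1 u2 u3 u4
  have v0 : A * α ^ 4 - B * γ ^ 4 = N := by linear_combination u0
  have v1 : A * α ^ 3 * β - B * γ ^ 3 * δ = N / 2 := by linear_combination u1 / 2
  have v2 : A * α ^ 2 * β ^ 2 - B * γ ^ 2 * δ ^ 2 = N / 3 := by linear_combination u2 / 3
  have v3 : A * α * β ^ 3 - B * γ * δ ^ 3 = N / 4 := by linear_combination u3 / 4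
  have v4 : A * β ^ 4 - B * δ ^ 4 = N / 5 := by linear_combination u4 / 5
  have r1 : N * (β * δ - (α * δ + β * γ) / 2 + α * γ / 3) = 0 := by
    linear_combination -(β * δ) * v0 + (α * δ + β * γ) * v1 - α * γ * v2
  have r2 : N * (β * δ / 2 - (α * δ + β * γ) / 3 + α * γ / 4) = 0 := by
    linear_combination -(β * δ) * v1 + (α * δ + β * γ) * v2 - α * γ * v3
  have r3 : N * (β * δ / 3 - (α * δ + β * γ) / 4 + α * γ / 5) = 0 := by
    linear_combination -(β * δ) * v2 + (α * δ + β * γ) * v3 - α * γ * v4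
  replace r1 := (mul_eq_zero.1 r1).resolve_left hN
  replace r2 := (mul_eq_zero.1 r2).resolve_left hN
  replace r3 := (mul_eq_zero.1 r3).resolve_left hN
  have p : β * δ = 0 := by linear_combination 9 * r1 - 36 * r2 + 30 * r3
  have q : α * δ + β * γ = 0 := by linear_combination 36 * r1 - 192 * r2 + 180 * r3
  have r : α * γ = 0 := by linear_combination 30 * r1 - 180 * r2 + 180 * r3
  have hf : N * N = 0 := by
    rcases mul_eq_zero.1 r with h0 | h0
    · subst h0
      have hγ : γ ≠ 0 := by
        rintro rfl
        apply hN
        linear_combination -v0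
      have hβ : β = 0 := by
        rcases mul_eq_zero.1 (show β * γ = 0 by linear_combination q) with h | h
        · exact h
        · exact absurd h hγ
      subst hβ
      linear_combination (exp := 1) 12 * (-(N/3) * v0 + (B * γ ^ 4) * v2 + (N / 2) * v1 - B * γ ^ 3 * δ * v1)
    · subst h0
      have hα : α ≠ 0 := by
        rintro rfl
        apply hN
        linear_combination -v0
      have hδ : δ = 0 := by
        rcases mul_eq_zero.1 (show α * δ = 0 by linear_combination q) with h | h
        · exact absurd h hα
        · exact h
      subst hδ
      linear_combination (exp := 1) 12 * (-(N/3) * v0 - (A * α ^ 4) * v2 + (N / 2) * v1 + A * α ^ 3 * β * v1)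
  exact hN (mul_self_eq_zero.1 hf)
end

section
/- Let K be an algebraically closed field of characteristic 0, let n > 4 be an integer with n ≠ 6, and let ε ∈ K be a primitive n-th root of unity. Let m be a positive integer with gcd(m,n) = 1, let ζ ∈ K be a primitive m-th root of unity, and let α₀, α₁, α₂, α₃ be elements of the subfield of K generated by ℚ and ζ (the image of ℚ(ζ_m) in K). Then there do not exist a, b, c, e ∈ K with ae − bc ≠ 0 such that for each i ∈ {0,1,2,3} one has c·ε^i + e ≠ 0 and a·ε^i + b = α_i·(c·ε^i + e); in other words, no linear fractional transformation T over K satisfies T(ε^i) = α_i for i = 0, 1, 2, 3. -/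
open Polynomial

lemma aux_tot (n : ℕ) (hn : 4 < n) (hn6 : n ≠ 6) : 2 < Nat.totient n := by
  obtain ⟨k, hk1, hk2, hk3⟩ : ∃ k, 1 < k ∧ k < n - 1 ∧ Nat.Coprime n k := by
    rcases Nat.even_or_odd n with ⟨k, rfl⟩ | h
    · rcases Nat.even_or_odd k with h | h
      · refine ⟨k + 1, by omega, by omega, ?_⟩
        have h2 : Nat.Coprime 2 (k + 1) := Nat.coprime_two_left.2 h.add_one
        rw [← two_mul]
        exact Nat.Coprime.mul_left h2 (by simp)
      · have hk : k ≠ 3 := by omega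
        refine ⟨k + 2, by omega, by omega, ?_⟩
        have h2 : Nat.Coprime 2 (k + 2) := Nat.coprime_two_left.2 (h.add_even even_two)
        rw [← two_mul]
        refine Nat.Coprime.mul_left h2 ?_
        simpa using Nat.coprime_two_right.2 h
    · exact ⟨2, by omega, by omega, Nat.coprime_two_right.2 h⟩
  rw [Nat.totient_eq_card_coprime]
  have hsub : ({1, k, n - 1} : Finset ℕ) ⊆ (Finset.range n).filter (Nat.Coprime n) := by
    intro x hx
    simp only [Finset.mem_insert, Finset.mem_singleton] at hx
    simp only [Finset.mem_filter, Finset.mem_range]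
    rcases hx with rfl | rfl | rfl
    · exact ⟨by omega, by simp⟩
    · exact ⟨by omega, hk3⟩
    · refine ⟨by omega, ?_⟩
      obtain ⟨j, rfl⟩ : ∃ j, n = j + 1 := ⟨n - 1, by omega⟩
      simp
  have hc : ({1, k, n - 1} : Finset ℕ).card = 3 := by
    rw [Finset.card_eq_three]
    exact ⟨1, k, n - 1, by omega, by omega, by omega, rfl⟩
  rw [← Nat.succ_le_iff]
  calc 3 = _ := hc.symm
    _ ≤ _ := Finset.card_le_card hsub

open IntermediateField in
lemma aux_deg {K : Type*} [Field K] [CharZero K]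
    (n : ℕ) (hn : 0 < n)
    (ε : K) (hε : IsPrimitiveRoot ε n)
    (m : ℕ) (hm : 0 < m) (hmn : Nat.gcd m n = 1)
    (ζ : K) (hζ : IsPrimitiveRoot ζ m) (s : K) (hs : s ∈ ℚ⟮ζ⟯)
    (h : ε ^ 2 + s * ε + 1 = 0) : Nat.totient n ≤ 2 := by
  let F := ℚ⟮ζ⟯
  have hζi : IsIntegral ℚ ζ := (hζ.isIntegral hm).tower_top
  have hFd : Module.finrank ℚ F = Nat.totient m := by
    rw [IntermediateField.adjoin.finrank hζi, ← cyclotomic_eq_minpoly_rat hζ hm,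
      natDegree_cyclotomic]
  have : FiniteDimensional ℚ F := adjoin.finiteDimensional hζi
  let p : F[X] := X ^ 2 + (C ⟨s, hs⟩ * X + C 1)
  have hdeg : (C (⟨s, hs⟩ : F) * X + C 1).degree < ((2 : ℕ) : WithBot ℕ) :=
    lt_of_le_of_lt degree_linear_le (by norm_num)
  have hpm : p.Monic := monic_X_pow_add hdeg
  have hpd : p.natDegree = 2 := by
    refine natDegree_eq_of_degree_eq_some ?_
    rw [degree_add_eq_left_of_degree_lt (by rwa [degree_X_pow]), degree_X_pow]
  have hp0 : aeval ε p = 0 := by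
    simp only [p, map_add, map_mul, map_pow, aeval_X, aeval_C, map_one]
    rw [← add_assoc]
    exact h
  have hεi : IsIntegral F ε := ⟨p, hpm, hp0⟩
  let L := F⟮ε⟯
  have hLd : Module.finrank F L ≤ 2 := by
    rw [IntermediateField.adjoin.finrank hεi, ← hpd]
    exact natDegree_le_natDegree (minpoly.min F ε hpm hp0)
  have : FiniteDimensional F L := adjoin.finiteDimensional hεi
  have : FiniteDimensional ℚ L := FiniteDimensional.trans ℚ F L
  have htower := Module.finrank_mul_finrank ℚ F L
  let x : L := algebraMap F L ⟨ζ, mem_adjoin_simple_self ℚ ζ⟩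
  let y : L := ⟨ε, mem_adjoin_simple_self F ε⟩
  have hx : IsPrimitiveRoot x m :=
    IsPrimitiveRoot.of_map_of_injective (f := algebraMap L K) (by exact hζ)
      (algebraMap L K).injective
  have hy : IsPrimitiveRoot y n :=
    IsPrimitiveRoot.of_map_of_injective (f := algebraMap L K) (by exact hε)
      (algebraMap L K).injective
  have key := IsPrimitiveRoot.lcm_totient_le_finrank (K := ℚ) hx hy
    (cyclotomic.irreducible_rat (Nat.lcm_pos hm hn))
  rw [Nat.Coprime.lcm_eq_mul hmn, Nat.totient_mul hmn, ← htower, hFd] at key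
  exact (Nat.le_of_mul_le_mul_left key (Nat.totient_pos.2 hm)).trans hLd

theorem stmt_13 {K : Type*} [Field K] [IsAlgClosed K] [CharZero K]
    (n : ℕ) (hn : 4 < n) (hn6 : n ≠ 6)
    (ε : K) (hε : IsPrimitiveRoot ε n)
    (m : ℕ) (hm : 0 < m) (hmn : Nat.gcd m n = 1)
    (ζ : K) (hζ : IsPrimitiveRoot ζ m)
    (α : Fin 4 → K) (hα : ∀ i, α i ∈ Subfield.closure {ζ}) :
    ¬ ∃ a b c e : K, a * e - b * c ≠ 0 ∧
      ∀ i : Fin 4,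
        c * ε ^ (i : ℕ) + e ≠ 0 ∧
        a * ε ^ (i : ℕ) + b = α i * (c * ε ^ (i : ℕ) + e) := by
  rintro ⟨a, b, c, e, hdet, H⟩
  have hF : ∀ i, α i ∈ IntermediateField.adjoin ℚ {ζ} := by
    intro i
    have : Subfield.closure {ζ} ≤ (IntermediateField.adjoin ℚ {ζ}).toSubfield := by
      rw [Subfield.closure_le]
      exact IntermediateField.subset_adjoin ℚ {ζ}
    exact this (hα i)
  have hpow : ∀ i j : Fin 4, i ≠ j → ε ^ (i : ℕ) - ε ^ (j : ℕ) ≠ 0 := by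
    intro i j hij h
    exact hij (Fin.ext (hε.pow_inj (by omega) (by omega) (sub_eq_zero.1 h)))
  have hd : ∀ i j : Fin 4, α i - α j = (a * e - b * c) * (ε ^ (i : ℕ) - ε ^ (j : ℕ)) /
      ((c * ε ^ (i : ℕ) + e) * (c * ε ^ (j : ℕ) + e)) := by
    intro i j
    rw [eq_div_iff (mul_ne_zero (H i).1 (H j).1)]
    linear_combination (-(c * ε ^ (j : ℕ) + e)) * (H i).2 + (c * ε ^ (i : ℕ) + e) * (H j).2
  have hne : ∀ i j : Fin 4, i ≠ j → α i - α j ≠ 0 := by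
    intro i j hij
    rw [hd]
    exact div_ne_zero (mul_ne_zero hdet (hpow i j hij)) (mul_ne_zero (H i).1 (H j).1)
  have hcr : (α 0 - α 2) * (α 1 - α 3) * ((ε ^ 0 - ε ^ 3) * (ε ^ 1 - ε ^ 2)) =
      (α 0 - α 3) * (α 1 - α 2) * ((ε ^ 0 - ε ^ 2) * (ε ^ 1 - ε ^ 3)) := by
    rw [hd 0 2, hd 1 3, hd 0 3, hd 1 2]
    have h0 := (H 0).1
    have h1 := (H 1).1
    have h2 := (H 2).1
    have h3 := (H 3).1
    simp only [show ((0 : Fin 4) : ℕ) = 0 from rfl, show ((1 : Fin 4) : ℕ) = 1 from rfl,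
      show ((2 : Fin 4) : ℕ) = 2 from rfl, show ((3 : Fin 4) : ℕ) = 3 from rfl] at *
    rw [div_mul_div_comm, div_mul_div_comm, div_mul_eq_mul_div, div_mul_eq_mul_div]
    congr 1 <;> ring
  have hD : (α 0 - α 3) * (α 1 - α 2) ≠ 0 :=
    mul_ne_zero (hne 0 3 (by decide)) (hne 1 2 (by decide))
  have hDm : (α 0 - α 3) * (α 1 - α 2) ∈ IntermediateField.adjoin ℚ {ζ} :=
    mul_mem (sub_mem (hF 0) (hF 3)) (sub_mem (hF 1) (hF 2))
  have hNm : (α 0 - α 2) * (α 1 - α 3) ∈ IntermediateField.adjoin ℚ {ζ} :=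
    mul_mem (sub_mem (hF 0) (hF 2)) (sub_mem (hF 1) (hF 3))
  generalize (α 0 - α 3) * (α 1 - α 2) = D at *
  generalize (α 0 - α 2) * (α 1 - α 3) = N at *
  have hε0 : ε ≠ 0 := hε.ne_zero (by omega)
  have h1 : ε ^ 0 - ε ^ 1 ≠ 0 := hpow 0 1 (by decide)
  have hq : (1 + ε + ε ^ 2) * (N - D) = ε * D := by
    have : ε * (ε ^ 0 - ε ^ 1) ^ 2 ≠ 0 := mul_ne_zero hε0 (pow_ne_zero _ h1)
    apply mul_left_cancel₀ this
    linear_combination hcr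
  have hND : N - D ≠ 0 := by
    intro h
    rw [h, mul_zero] at hq
    exact mul_ne_zero hε0 hD hq.symm
  have := aux_deg n (by omega) ε hε m hm hmn ζ hζ (1 - D / (N - D))
    (sub_mem (one_mem _) (div_mem hDm (sub_mem hNm hDm))) (by
      field_simp
      linear_combination hq)
  have := aux_tot n hn hn6
  omega
end

section
/- Let n ≥ 3 be an integer and K an algebraically closed field whose characteristic divides neither n − 1 nor n. Let α, β, γ, δ ∈ K be such that X^n + (αX + β)^{n−1} = (X + 1)^n + (γX + δ)^{n−1} in K[X], and assume this polynomial has no repeated roots. Then αδ − βγ ≠ 0, so that T(z) = (αz + β)/(γz + δ) is an honest linear fractional transformation of the projective line over K; moreover, for every root η ∈ K of the polynomial (X + 1)^n − X^n one has γη + δ ≠ 0, and T maps the (n−1)-element set of roots of (X + 1)^n − X^n bijectively onto the (n−1)-element set μ_{n−1} of (n−1)-th roots of unity in K. -/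
open Polynomial

theorem stmt_15 {K : Type*} [Field K] [IsAlgClosed K]
    (n : ℕ) (hn : 3 ≤ n)
    (hchar1 : ¬ (ringChar K ∣ (n - 1))) (hchar2 : ¬ (ringChar K ∣ n))
    (α β γ δ : K)
    (heq : (X : K[X]) ^ n + (C α * X + C β) ^ (n - 1) =
      (X + 1) ^ n + (C γ * X + C δ) ^ (n - 1))
    (hsqf : Squarefree ((X : K[X]) ^ n + (C α * X + C β) ^ (n - 1))) :
    α * δ - β * γ ≠ 0 ∧
    (∀ η : K, (((X : K[X]) + 1) ^ n - X ^ n).eval η = 0 → γ * η + δ ≠ 0) ∧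
    Set.BijOn (fun η : K => (α * η + β) / (γ * η + δ))
      {η : K | (((X : K[X]) + 1) ^ n - X ^ n).eval η = 0}
      {z : K | z ^ (n - 1) = 1} := by
  have hnK : (n : K) ≠ 0 := fun h => hchar2 ((ringChar.spec K n).1 h)
  clear hsqf hchar1 hchar2
  obtain ⟨k, rfl⟩ : ∃ k, n = k + 3 := ⟨n - 3, by omega⟩
  have hk : k + 3 - 1 = k + 2 := by omega
  rw [hk] at heq ⊢
  have hev : ∀ x : K, x ^ (k + 3) + (α * x + β) ^ (k + 2) =
      (x + 1) ^ (k + 3) + (γ * x + δ) ^ (k + 2) := fun x => by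
    simpa using congrArg (eval x) heq
  have hder : ∀ x : K, ((k + 3 : ℕ) : K) * x ^ (k + 2) +
      ((k + 2 : ℕ) : K) * (α * x + β) ^ (k + 1) * α =
      ((k + 3 : ℕ) : K) * (x + 1) ^ (k + 2) +
      ((k + 2 : ℕ) : K) * (γ * x + δ) ^ (k + 1) * γ := fun x => by
    have := congrArg (fun p => eval x (derivative p)) heq
    simpa [derivative_pow] using this
  have hlead : α ^ (k + 2) = ((k + 3 : ℕ) : K) + γ ^ (k + 2) := by
    have hc : ∀ a b : K, ((C a * X + C b) ^ (k + 2)).coeff (k + 2) = a ^ (k + 2) := by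
      intro a b
      have := coeff_pow_of_natDegree_le (m := k + 2) (natDegree_linear_le (a := a) (b := b))
      simpa using this
    have := congrArg (fun p => coeff p (k + 2)) heq
    simp only [coeff_add, coeff_X_add_one_pow, coeff_X_pow] at this
    have h1 := hc α β
    have h2 := hc γ δ
    rw [h1, h2] at this
    have h3 : (k + 3).choose (k + 2) = k + 3 := Nat.choose_succ_self_right (k + 2)
    rw [h3] at this
    simpa using this
  have hcommon : ∀ x : K, α * x + β = 0 → γ * x + δ = 0 → False := by
    intro x h1 h2
    have e := hev x
    have d := hder x
    rw [h1, h2] at e d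
    simp only [ne_eq, Nat.add_eq_zero_iff, OfNat.ofNat_ne_zero, one_ne_zero, and_false,
      not_false_eq_true, zero_pow, add_zero, mul_zero, zero_mul] at e d
    have d' := mul_left_cancel₀ hnK d
    rw [pow_succ x, pow_succ (x + 1), ← d'] at e
    have h0 : x ^ (k + 2) = 0 := by linear_combination -e
    have hx : x = 0 := pow_eq_zero_iff (by omega) |>.1 h0
    rw [h0, hx] at d'
    simp at d'
  have hdet : α * δ - β * γ ≠ 0 := by
    intro h
    by_cases ha : α = 0
    · by_cases hg : γ = 0
      · rw [ha, hg] at hlead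
        simp only [ne_eq, Nat.add_eq_zero_iff, OfNat.ofNat_ne_zero, and_false,
          not_false_eq_true, zero_pow, add_zero] at hlead
        exact hnK hlead.symm
      · refine hcommon (-δ / γ) ?_ ?_
        · field_simp; linear_combination -h
        · field_simp; ring
    · refine hcommon (-β / α) ?_ ?_
      · field_simp; ring
      · field_simp; linear_combination h
  have hroot : ∀ η : K, (((X : K[X]) + 1) ^ (k + 3) - X ^ (k + 3)).eval η = 0 ↔
      (α * η + β) ^ (k + 2) = (γ * η + δ) ^ (k + 2) := by
    intro η
    have e := hev η
    simp only [eval_sub, eval_pow, eval_add, eval_X, eval_one]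
    constructor <;> intro h
    · linear_combination e + h
    · linear_combination h - e
  have hden : ∀ η : K, (((X : K[X]) + 1) ^ (k + 3) - X ^ (k + 3)).eval η = 0 →
      γ * η + δ ≠ 0 := by
    intro η h h2
    rw [hroot, h2, zero_pow (by omega)] at h
    exact hcommon η (pow_eq_zero_iff (by omega) |>.1 h) h2
  refine ⟨hdet, hden, ?_, ?_, ?_⟩
  · intro η h
    have h1 := hden η h
    have h2 := (hroot η).1 h
    simp only [Set.mem_ofPred_eq]
    rw [div_pow, h2, div_self (pow_ne_zero _ h1)]
  · intro a ha b hb hab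
    have h1 := hden a ha
    have h2 := hden b hb
    simp only at hab
    rw [div_eq_div_iff h1 h2] at hab
    have : (α * δ - β * γ) * (a - b) = 0 := by linear_combination hab
    exact sub_eq_zero.1 ((mul_eq_zero.1 this).resolve_left hdet)
  · intro z hz
    simp only [Set.mem_ofPred_eq] at hz
    have hne : α - z * γ ≠ 0 := by
      intro h
      rw [sub_eq_zero.1 h, mul_pow, hz] at hlead
      exact hnK (by linear_combination -hlead)
    have hE : α * ((z * δ - β) / (α - z * γ)) + β =
        z * (γ * ((z * δ - β) / (α - z * γ)) + δ) := by
      field_simp; ring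
    have hr := (hroot ((z * δ - β) / (α - z * γ))).2 (by rw [hE, mul_pow, hz, one_mul])
    refine ⟨(z * δ - β) / (α - z * γ), hr, ?_⟩
    simp only
    rw [hE, mul_div_assoc, div_self (hden _ hr), mul_one]
end

section
/- Let K be an algebraically closed field of characteristic different from 2 and 3, and let α, β ∈ K. Then the quartic polynomial X⁴ + (αX + β)³ ∈ K[X] has a repeated root if and only if β = 0 or 256·β = 27·α⁴. (Equivalently, its discriminant equals β⁸·(256β − 27α⁴).) -/
open Polynomial

theorem stmt_19 {K : Type*} [Field K] [IsAlgClosed K]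
    (hchar2 : ringChar K ≠ 2) (hchar3 : ringChar K ≠ 3)
    (α β : K) :
    (∃ x : K, 2 ≤ ((X : K[X]) ^ 4 + (C α * X + C β) ^ 3).rootMultiplicity x) ↔
      (β = 0 ∨ 256 * β = 27 * α ^ 4) := by
  have h2 : (2 : K) ≠ 0 := Ring.two_ne_zero hchar2
  have hm : ((X : K[X]) ^ 4 + (C α * X + C β) ^ 3).Monic := by
    apply monic_X_pow_add
    have : ((C α * X + C β) ^ 3 : K[X]).degree ≤ 3 := by compute_degree
    exact lt_of_le_of_lt this (by norm_num)
  have key : ∀ x : K, 2 ≤ ((X : K[X]) ^ 4 + (C α * X + C β) ^ 3).rootMultiplicity x ↔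
      (x ^ 4 + (α * x + β) ^ 3 = 0 ∧ 4 * x ^ 3 + 3 * (α * x + β) ^ 2 * α = 0) := by
    intro x
    have h := one_lt_rootMultiplicity_iff_isRoot (t := x) hm.ne_zero
    refine Iff.trans Nat.succ_le_iff (h.trans ?_)
    simp [IsRoot.def, derivative_pow]
  simp only [key]
  constructor
  · rintro ⟨x, h1, h3⟩
    have e : (α * x + β) ^ 2 * (α * x + 4 * β) = 0 := by
      linear_combination 4 * h1 - x * h3
    rcases mul_eq_zero.1 e with e | e
    · have y0 : α * x + β = 0 := by simpa using e
      have x0 : x = 0 := by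
        rw [y0] at h1
        simpa using h1
      left
      simpa [x0] using y0
    · have hx : α * x = -4 * β := by linear_combination e
      have hx4 : x ^ 4 = 27 * β ^ 3 := by
        rw [hx] at h1
        linear_combination h1
      have h4 : (α * x) ^ 4 = 256 * β ^ 4 := by rw [hx]; ring
      have h5 : β ^ 3 * (256 * β - 27 * α ^ 4) = 0 := by
        linear_combination α ^ 4 * hx4 - h4
      rcases mul_eq_zero.1 h5 with h | h
      · left; simpa using h
      · right; linear_combination h
  · intro h
    by_cases hb : β = 0
    · exact ⟨0, by simp [hb], by simp [hb]⟩
    · have h := h.resolve_left hb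
      have ha : α ≠ 0 := by
        rintro rfl
        have : (2 : K) ^ 8 * β = 0 := by linear_combination h
        simp [h2, hb] at this
      obtain ⟨x, hx⟩ : ∃ x, α * x = -4 * β := ⟨-4 * β / α, by field_simp⟩
      have hx4 : x ^ 4 = 27 * β ^ 3 := by
        have h4 : (α * x) ^ 4 = 256 * β ^ 4 := by rw [hx]; ring
        apply mul_left_cancel₀ (pow_ne_zero 4 ha)
        linear_combination h4 + β ^ 3 * h
      have x0 : α * x ≠ 0 := by
        rw [hx]
        have : (-4 : K) = -(2 ^ 2) := by norm_num
        rw [this]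
        simp [h2, hb]
      refine ⟨x, ?_, ?_⟩
      · rw [hx, hx4]; ring
      · apply mul_left_cancel₀ (right_ne_zero_of_mul x0)
        rw [hx]
        linear_combination 4 * hx4 + 27 * β ^ 2 * hx
end
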